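/- arXiv:0908.4572 — 2 statements merged into one kernel-verified Lean document; each statement's English description precedes it below -/
import Mathlib

section
/- Let G be a loopless multigraph on n vertices in which every pair of vertices is joined by at most ℓ edges, with minimum degree δ (counting multiplicity) satisfying δ ≥ ℓn/2. Let r be an even positive integer with r ≤ (δ + √(ℓn(2δ - ℓn)))/2. Then G contains an r-factor, i.e. a spanning submultigraph in which every vertex has degree exactly r. -/
/-!
The proof is Tutte's `f`-factor theorem followed by an estimate of the deficiency.

Write `r = 2 * k`. The `gadget` graph has `2 * k` copies of every vertex and one vertex for every
end of an edge; its perfect matchings correspond to `r`-factors (`factor_of_isPerfectMatching`).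
If there is none, Tutte's theorem provides a set `X` leaving more than `#X` odd components. Taking
`#X` minimal, every vertex of `X` must touch at least three of these components. This forces `X` to
consist of all copies of the vertices of a set `S` and all edge ends at the vertices of a disjoint
set `T`, and counting the odd components gives (`exists_deficient`)
`E + r * #S < r * #T + q`, where `E = ∑ v ∈ T, d(v) - e(S, T)` and `q` is the number of disjoint
nonempty sets of vertices outside `S ∪ T` with no edges leaving them except to `S ∪ T`, each
accounting for an odd component. As `r` is even, every such set sends an edge to `T`, so `q ≤ E`.

This is contradicted by `deficiency_bound`. Put `s = #S`, `t = #T`. For `s ≥ t` use `q ≤ E`. For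
`s < t` use `E ≥ t * (δ - ℓ * s)`. A vertex of one of the `q` sets has degree at least `δ`, so each
set is large, and this gives `q ≤ max 1 (s + t)` (`component_bound`). It then suffices to show
`q ≤ t * (δ - r) + s * (r - ℓ * t)`. For `ℓ * t < r` the right-hand side is at least `s + t`. For `ℓ * t > r`, the `n - s - t ≥ q`
remaining vertices each add `ℓ * t - r ≥ 1` to the value at `s = n - t`. That value is a quadratic
in `t` with discriminant `(2 * r - δ) ^ 2 - ℓ * n * (2 * δ - ℓ * n)`, and for `2 * r ≥ δ` the
hypothesis on `r` says exactly that this is nonpositive; smaller `r` is easier, because the bound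
decreases in `r`. For `ℓ * t = r` the right-hand side is `t * (δ - r)`, which is at least `2 * t`
unless `δ = r + 1`, and in that case the hypothesis on `r` makes `n` too small for `q > t`.
-/

/-! ### Barriers: Tutte violators recorded as families of odd closed sets -/

/-- A certificate that `H` has no perfect matching: a vertex set `X` and a family `F` of more than
`#X` disjoint odd sets avoiding `X`, each closed under adjacency in `H - X`. The members of `F` are
unions of components of `H - X`; they are not required to be connected, which makes it easy to
merge two of them when a vertex is removed from `X`. -/
structure IsBarrier {W : Type*} (H : SimpleGraph W) (X : Finset W) (F : Finset (Finset W)) :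
    Prop where
  odd : ∀ A ∈ F, Odd A.card
  notMem : ∀ A ∈ F, ∀ x ∈ A, x ∉ X
  disj : ∀ A ∈ F, ∀ B ∈ F, ∀ x, x ∈ A → x ∈ B → A = B
  closed : ∀ A ∈ F, ∀ x ∈ A, ∀ y, H.Adj x y → y ∈ A ∨ y ∈ X
  lt : X.card < F.card

/-- The nontrivial direction of Tutte's theorem: the odd components of `H - X` for a Tutte
violator `X` form a barrier. -/
lemma exists_isBarrier {W : Type*} [Fintype W] [DecidableEq W] (H : SimpleGraph W)
    (h : ∀ M : H.Subgraph, ¬ M.IsPerfectMatching) :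
    ∃ X F, IsBarrier H X F := by
  classical
  obtain ⟨u, hu⟩ : ∃ u, H.IsTutteViolator u := by
    by_contra! hcon
    obtain ⟨M, hM⟩ := SimpleGraph.tutte.2 hcon
    exact h M hM
  set K := ((⊤ : H.Subgraph).deleteVerts u).coe with hK
  unfold SimpleGraph.IsTutteViolator at hu
  let g : K.ConnectedComponent → Finset W := fun c => (Subtype.val '' c.supp).toFinset
  have hmem : ∀ c x, x ∈ g c ↔ ∃ hx : x ∈ ((⊤ : H.Subgraph).deleteVerts u).verts,
      K.connectedComponentMk ⟨x, hx⟩ = c := by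
    intro c x
    simp only [g, Set.mem_toFinset, Set.mem_image, SimpleGraph.ConnectedComponent.mem_supp_iff]
    constructor
    · rintro ⟨⟨y, hy⟩, h1, rfl⟩
      exact ⟨hy, h1⟩
    · rintro ⟨hx, h1⟩
      exact ⟨⟨x, hx⟩, h1, rfl⟩
  have hinj : Function.Injective g := by
    intro c d hcd
    obtain ⟨⟨x, hx⟩, rfl⟩ := c.exists_rep
    have h1 : x ∈ g (K.connectedComponentMk ⟨x, hx⟩) := (hmem _ _).2 ⟨hx, rfl⟩
    have h2 := hcd ▸ h1
    obtain ⟨_, h3⟩ := (hmem _ _).1 h2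
    exact h3
  have hu' : u = (u.toFinset : Set W) := by simp
  refine ⟨u.toFinset, (K.oddComponents.toFinset).image g, ?_, ?_, ?_, ?_, ?_⟩
  · intro A hA
    obtain ⟨c, hc, rfl⟩ := Finset.mem_image.1 hA
    have hc' : Odd c.supp.ncard := by simpa using hc
    have : (g c).card = c.supp.ncard := by
      rw [← Set.ncard_image_of_injective c.supp Subtype.val_injective]
      simp only [g]
      rw [Set.ncard_eq_toFinset_card']
    rwa [this]
  · intro A hA x hx
    obtain ⟨c, hc, rfl⟩ := Finset.mem_image.1 hA
    obtain ⟨hx', -⟩ := (hmem _ _).1 hx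
    simpa using hx'
  · intro A hA B hB x hxA hxB
    obtain ⟨c, hc, rfl⟩ := Finset.mem_image.1 hA
    obtain ⟨d, hd, rfl⟩ := Finset.mem_image.1 hB
    obtain ⟨h1, h2⟩ := (hmem _ _).1 hxA
    obtain ⟨h3, h4⟩ := (hmem _ _).1 hxB
    rw [← h2, ← h4]
  · intro A hA x hx y hxy
    obtain ⟨c, hc, rfl⟩ := Finset.mem_image.1 hA
    obtain ⟨h1, h2⟩ := (hmem _ _).1 hx
    by_cases hy : y ∈ u
    · right; simpa using hy
    · left
      have hy' : y ∈ ((⊤ : H.Subgraph).deleteVerts u).verts := by simpa using hy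
      have hx' : x ∉ u := by simpa using h1
      refine (hmem _ _).2 ⟨hy', ?_⟩
      rw [← h2]
      apply SimpleGraph.ConnectedComponent.sound
      apply SimpleGraph.Adj.reachable
      rw [hK, SimpleGraph.Subgraph.coe_adj, SimpleGraph.Subgraph.deleteVerts_adj]
      simp [hx', hy, hxy.symm]
  · rw [Finset.card_image_of_injective _ hinj, ← Set.ncard_eq_toFinset_card',
      ← Set.ncard_eq_toFinset_card']
    exact hu

/-- In a barrier with `#X` minimal, the neighbours of a vertex of `X` meet at least two members of
the family: otherwise the vertex leaves `X` and the one member it touches is dropped. -/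
lemma IsBarrier.not_touch_one {W : Type*} [DecidableEq W] {H : SimpleGraph W}
    {X : Finset W} {F : Finset (Finset W)} (hb : IsBarrier H X F)
    (hmin : ∀ X' F', IsBarrier H X' F' → X.card ≤ X'.card)
    {x : W} (hx : x ∈ X) (A : Finset W)
    (hA : ∀ y, H.Adj x y → ∀ B ∈ F, y ∈ B → B = A) : False := by
  have hc := Finset.card_erase_lt_of_mem hx
  refine absurd (hmin (X.erase x) (F.erase A) ⟨?_, ?_, ?_, ?_, ?_⟩) (by omega)
  · intro B hB
    exact hb.odd B (Finset.mem_of_mem_erase hB)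
  · intro B hB y hy h
    exact hb.notMem B (Finset.mem_of_mem_erase hB) y hy (Finset.mem_of_mem_erase h)
  · intro B hB C hC
    exact hb.disj B (Finset.mem_of_mem_erase hB) C (Finset.mem_of_mem_erase hC)
  · intro B hB y hy z hyz
    rcases hb.closed B (Finset.mem_of_mem_erase hB) y hy z hyz with h | h
    · exact Or.inl h
    · right
      refine Finset.mem_erase.2 ⟨?_, h⟩
      rintro rfl
      exact (Finset.mem_erase.1 hB).1 (hA y hyz.symm B (Finset.mem_of_mem_erase hB) hy)
  · have h1 := hb.lt
    have h2 := Finset.pred_card_le_card_erase (s := F) (a := A)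
    have h3 := Finset.card_erase_of_mem hx
    have h4 := Finset.card_pos.2 ⟨x, hx⟩
    omega

/-- In a barrier with `#X` minimal, no vertex of `X` has all its neighbours in `X` and two members
of the family: otherwise the vertex leaves `X` and joins the two members into one odd set. -/
lemma IsBarrier.not_touch_two {W : Type*} [DecidableEq W] {H : SimpleGraph W}
    {X : Finset W} {F : Finset (Finset W)} (hb : IsBarrier H X F)
    (hmin : ∀ X' F', IsBarrier H X' F' → X.card ≤ X'.card)
    {x : W} (hx : x ∈ X) {A B : Finset W} (hA : A ∈ F) (hB : B ∈ F) (hAB : A ≠ B)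
    (h : ∀ y, H.Adj x y → y ∈ A ∨ y ∈ B ∨ y ∈ X) : False := by
  have hc := Finset.card_erase_lt_of_mem hx
  have hxA : x ∉ A := fun h' => hb.notMem A hA x h' hx
  have hxB : x ∉ B := fun h' => hb.notMem B hB x h' hx
  have hdis : Disjoint A B := Finset.disjoint_left.2 fun y h1 h2 => hAB (hb.disj A hA B hB y h1 h2)
  have hF : ∀ C ∈ (F.erase A).erase B, C ∈ F := fun C hC =>
    Finset.mem_of_mem_erase (Finset.mem_of_mem_erase hC)
  have hF' : ∀ C ∈ (F.erase A).erase B, ∀ y ∈ C, y ∉ insert x (A ∪ B) := by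
    intro C hC y hy hy'
    have h1 : C ≠ B := (Finset.mem_erase.1 hC).1
    have h2 : C ≠ A := (Finset.mem_erase.1 (Finset.mem_erase.1 hC).2).1
    rcases Finset.mem_insert.1 hy' with rfl | h3
    · exact hb.notMem C (hF C hC) _ hy hx
    · rcases Finset.mem_union.1 h3 with h3 | h3
      · exact h2 (hb.disj C (hF C hC) A hA y hy h3)
      · exact h1 (hb.disj C (hF C hC) B hB y hy h3)
  refine absurd (hmin (X.erase x) (insert (insert x (A ∪ B)) ((F.erase A).erase B))
    ⟨?_, ?_, ?_, ?_, ?_⟩) (by omega)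
  · intro C hC
    rcases Finset.mem_insert.1 hC with rfl | hC
    · rw [Finset.card_insert_of_notMem (by simp [hxA, hxB]), Finset.card_union_of_disjoint hdis]
      exact ((hb.odd A hA).add_odd (hb.odd B hB)).add_one
    · exact hb.odd C (hF C hC)
  · intro C hC y hy hyX
    have hyX' := Finset.mem_erase.1 hyX
    rcases Finset.mem_insert.1 hC with rfl | hC
    · rcases Finset.mem_insert.1 hy with rfl | h3
      · exact hyX'.1 rfl
      · rcases Finset.mem_union.1 h3 with h3 | h3
        · exact hb.notMem A hA y h3 hyX'.2
        · exact hb.notMem B hB y h3 hyX'.2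
    · exact hb.notMem C (hF C hC) y hy hyX'.2
  · intro C hC D hD y hyC hyD
    rcases Finset.mem_insert.1 hC with rfl | hC <;> rcases Finset.mem_insert.1 hD with rfl | hD
    · rfl
    · exact absurd hyC (hF' D hD y hyD)
    · exact absurd hyD (hF' C hC y hyC)
    · exact hb.disj C (hF C hC) D (hF D hD) y hyC hyD
  · intro C hC₀ y hy z hyz
    rw [Finset.mem_erase]
    rcases Finset.mem_insert.1 hC₀ with rfl | hC
    · by_cases hzx : z = x
      · left; simp [hzx]
      · rcases Finset.mem_insert.1 hy with rfl | h3
        · have := h z hyz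
          simp only [Finset.mem_insert, Finset.mem_union]; tauto
        · rcases Finset.mem_union.1 h3 with h3 | h3
          · have := hb.closed A hA y h3 z hyz
            simp only [Finset.mem_insert, Finset.mem_union]; tauto
          · have := hb.closed B hB y h3 z hyz
            simp only [Finset.mem_insert, Finset.mem_union]; tauto
    · rcases hb.closed C (hF C hC) y hy z hyz with h' | h'
      · exact Or.inl h'
      · refine Or.inr ⟨?_, h'⟩
        rintro rfl
        have := h y hyz.symm
        have h4 := hF' C hC y hy
        have h5 := hb.notMem C (hF C hC) y hy
        simp only [Finset.mem_insert, Finset.mem_union] at h4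
        tauto
  · have h1 := hb.lt
    rw [Finset.card_insert_of_notMem (fun h' => hF' _ h' x (by simp) (by simp)),
      Finset.card_erase_of_mem (Finset.mem_erase.2 ⟨hAB.symm, hB⟩), Finset.card_erase_of_mem hA,
      Finset.card_erase_of_mem hx]
    have h4 := Finset.card_pos.2 ⟨x, hx⟩
    omega

/-- Disjoint sets that all meet `P` number at most `#P`. -/
lemma card_le_of_disjoint_meet {W : Type*} (F : Finset (Finset W)) (P : Finset W)
    (hd : ∀ A ∈ F, ∀ B ∈ F, ∀ x, x ∈ A → x ∈ B → A = B)
    (h : ∀ A ∈ F, ∃ x ∈ A, x ∈ P) : F.card ≤ P.card := by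
  classical
  rcases F.eq_empty_or_nonempty with rfl | ⟨A₀, hA₀⟩
  · simp
  have : Nonempty W := ⟨(h A₀ hA₀).choose⟩
  choose! g hg1 hg2 using h
  refine Finset.card_le_card_of_injOn g hg2 ?_
  intro A hA B hB hAB
  exact hd A hA B hB (g A) (hg1 A hA) (hAB ▸ hg1 B hB)

/-- A finite set with a fixed-point-free involution has even size. -/
lemma even_card_of_invol {W : Type*} (A : Finset W) (σ : W → W)
    (hσ : ∀ x, σ (σ x) = x) (hne : ∀ x ∈ A, σ x ≠ x) (hA : ∀ x ∈ A, σ x ∈ A) :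
    Even A.card := by
  have : (∑ _x ∈ A, (1 : ZMod 2)) = 0 :=
    Finset.sum_involution (fun x _ => σ x) (fun _ _ => by decide) (fun x hx _ => hne x hx)
      hA (fun x _ => hσ x)
  rw [Finset.sum_const, nsmul_eq_mul, mul_one, ZMod.natCast_eq_zero_iff] at this
  exact even_iff_two_dvd.2 this

/-! ### The matching gadget -/

/-- The ends of the edges of a multigraph: `(v, u, i)` is the end at `v` of the `i`-th edge
joining `v` and `u`. -/
abbrev EdgeEnd {n : ℕ} (ℓ : ℕ) (mult : Fin n → Fin n → ℕ) : Type :=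
  {p : Fin n × Fin n × Fin ℓ // (p.2.2 : ℕ) < mult p.1 p.2.1}

/-- The other end of the same edge. -/
def EdgeEnd.swap {n ℓ : ℕ} {mult : Fin n → Fin n → ℕ} (hsymm : ∀ u v, mult u v = mult v u)
    (e : EdgeEnd ℓ mult) : EdgeEnd ℓ mult :=
  ⟨(e.1.2.1, e.1.1, e.1.2.2), by simpa [hsymm e.1.2.1 e.1.1] using e.2⟩

/-- Vertices of the gadget: `2 * k` copies of each vertex, indexed by `Fin k × Bool` so that
flipping the `Bool` pairs them up, and all edge ends. -/
abbrev GadgetVert {n : ℕ} (k ℓ : ℕ) (mult : Fin n → Fin n → ℕ) : Type :=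
  (Fin n × Fin k × Bool) ⊕ EdgeEnd ℓ mult

/-- The gadget graph: every copy of `v` is joined to every edge end at `v`, and the two ends of
each edge are joined. In a perfect matching each copy of `v` selects an edge at `v`, and an edge is
selected either from both of its ends or from neither, so the selected edges form a
`2 * k`-factor. -/
def gadget {n : ℕ} (k ℓ : ℕ) (mult : Fin n → Fin n → ℕ) (hsymm : ∀ u v, mult u v = mult v u)
    (hloop : ∀ v, mult v v = 0) : SimpleGraph (GadgetVert k ℓ mult) where
  Adj x y := match x, y with
    | .inl _, .inl _ => False
    | .inl c, .inr e => c.1 = e.1.1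
    | .inr e, .inl c => c.1 = e.1.1
    | .inr e, .inr e' => e' = e.swap hsymm
  symm := ⟨by
    rintro (c | e) (c' | e') h
    · exact h
    · exact h
    · exact h
    · simp only at h ⊢
      rw [h]
      rfl⟩
  loopless := ⟨by
    rintro (c | ⟨⟨u, v, i⟩, he⟩) h
    · exact h
    · simp only [EdgeEnd.swap, Subtype.mk.injEq, Prod.mk.injEq] at h
      simp [h.1, hloop] at he⟩

section Gadget

variable {n k ℓ : ℕ} {mult : Fin n → Fin n → ℕ} {hsymm : ∀ u v, mult u v = mult v u}
  {hloop : ∀ v, mult v v = 0}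

@[simp] lemma gadget_adj_inl_inl {c c'} :
    ¬ (gadget k ℓ mult hsymm hloop).Adj (.inl c) (.inl c') := fun h => h

@[simp] lemma gadget_adj_inl_inr {c e} :
    (gadget k ℓ mult hsymm hloop).Adj (.inl c) (.inr e) ↔ c.1 = e.1.1 := Iff.rfl

@[simp] lemma gadget_adj_inr_inl {c e} :
    (gadget k ℓ mult hsymm hloop).Adj (.inr e) (.inl c) ↔ c.1 = e.1.1 := Iff.rfl

@[simp] lemma gadget_adj_inr_inr {e e'} :
    (gadget k ℓ mult hsymm hloop).Adj (.inr e) (.inr e') ↔ e' = e.swap hsymm := Iff.rfl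

lemma EdgeEnd.fst_ne (hloop : ∀ v, mult v v = 0) (e : EdgeEnd ℓ mult) : e.1.1 ≠ e.1.2.1 := by
  intro h
  have := e.2
  rw [← h, hloop] at this
  omega

/-- Edge ends `(v, u, i)` with `P v u`, counted with multiplicities. -/
lemma card_edgeEnd (hcap : ∀ u v, mult u v ≤ ℓ) (P : Fin n → Fin n → Prop)
    [∀ u v, Decidable (P u v)] :
    (Finset.univ.filter fun e : EdgeEnd ℓ mult => P e.1.1 e.1.2.1).card =
      ∑ v, ∑ u, if P v u then mult v u else 0 := by
  rw [← Finset.card_map (Function.Embedding.subtype _)]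
  have : (Finset.univ.filter fun e : EdgeEnd ℓ mult => P e.1.1 e.1.2.1).map
      (Function.Embedding.subtype _) = Finset.univ.filter fun p : Fin n × Fin n × Fin ℓ =>
        (p.2.2 : ℕ) < mult p.1 p.2.1 ∧ P p.1 p.2.1 := by
    ext p
    simp only [Finset.mem_map, Finset.mem_filter, Finset.mem_univ, true_and,
      Function.Embedding.subtype_apply]
    constructor
    · rintro ⟨e, he, rfl⟩
      exact ⟨e.2, he⟩
    · rintro ⟨h1, h2⟩
      exact ⟨⟨p, h1⟩, h2, rfl⟩
  rw [this, Finset.card_filter, Fintype.sum_prod_type]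
  refine Finset.sum_congr rfl fun v _ => ?_
  rw [Fintype.sum_prod_type]
  refine Finset.sum_congr rfl fun u _ => ?_
  dsimp only
  split_ifs with h
  · simp only [h, and_true]
    rw [← Finset.card_filter, Fin.card_filter_val_lt, min_eq_right (hcap v u)]
  · simp [h]

/-- A perfect matching of the gadget gives a `2 * k`-factor. -/
lemma factor_of_isPerfectMatching
    (M : (gadget k ℓ mult hsymm hloop).Subgraph) (hM : M.IsPerfectMatching) :
    ∃ mult' : Fin n → Fin n → ℕ,
      (∀ u v, mult' u v ≤ mult u v) ∧
      (∀ u v, mult' u v = mult' v u) ∧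
      (∀ v, ∑ u, mult' v u = 2 * k) := by
  classical
  rw [SimpleGraph.Subgraph.isPerfectMatching_iff] at hM
  choose f hf hf' using hM
  have hinv : ∀ x y, f x = y → f y = x := fun x y h => (hf' y x (h ▸ (hf x)).symm).symm
  -- An edge end is selected when it is matched to a copy rather than to its other end.
  let sel : Fin n → Fin n → Fin ℓ → Prop := fun v u i =>
    ∃ h : (i : ℕ) < mult v u, ∃ c, f (.inr ⟨(v, u, i), h⟩) = .inl c
  have hsel : ∀ v u i, sel v u i → sel u v i := by
    rintro v u i ⟨h, c, hc⟩
    refine ⟨hsymm v u ▸ h, ?_⟩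
    rcases hx : f (.inr ⟨(u, v, i), hsymm v u ▸ h⟩) with c' | e
    · exact ⟨c', rfl⟩
    · have h1 := M.adj_sub (hf (.inr ⟨(u, v, i), hsymm v u ▸ h⟩))
      rw [hx, gadget_adj_inr_inr] at h1
      have h2 := hinv _ _ hx
      subst h1
      rw [EdgeEnd.swap] at h2
      rw [hc] at h2
      simp at h2
  refine ⟨fun v u => (Finset.univ.filter (sel v u)).card, fun v u => ?_, fun u v => ?_,
    fun v => ?_⟩
  · calc (Finset.univ.filter (sel v u)).card
        ≤ (Finset.univ.filter fun i : Fin ℓ => (i : ℕ) < mult v u).card := by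
          refine Finset.card_le_card fun i hi => ?_
          simp only [Finset.mem_filter, Finset.mem_univ, true_and] at hi ⊢
          exact hi.1
      _ ≤ mult v u := by rw [Fin.card_filter_val_lt]; exact min_le_right _ _
  · dsimp only
    congr 1
    ext i
    simp only [Finset.mem_filter, Finset.mem_univ, true_and]
    exact ⟨hsel u v i, hsel v u i⟩
  · rw [← Finset.card_sigma]
    have hcard : (Finset.univ : Finset (Fin k × Bool)).card = 2 * k := by
      simp [Fintype.card_prod, mul_comm]
    rw [← hcard]
    symm
    -- Each copy of `v` is matched to a selected edge end at `v`, bijectively.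
    have hend : ∀ d : Fin k × Bool, ∃ e : EdgeEnd ℓ mult, f (.inl (v, d)) = .inr e ∧ v = e.1.1 := by
      intro d
      have h1 := M.adj_sub (hf (.inl (v, d)))
      rcases hx : f (.inl (v, d)) with c | e
      · rw [hx] at h1
        exact absurd h1 gadget_adj_inl_inl
      · rw [hx] at h1
        exact ⟨e, rfl, h1⟩
    choose g hg hgv using hend
    refine Finset.card_bij (fun d _ => ⟨(g d).1.2.1, (g d).1.2.2⟩) ?_ ?_ ?_
    · intro d _
      simp only [Finset.mem_sigma, Finset.mem_univ, Finset.mem_filter, true_and]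
      have h1 := hinv _ _ (hg d)
      have h2 := hgv d
      generalize g d = e at h1 h2
      obtain ⟨⟨v', u, i⟩, he⟩ := e
      subst h2
      exact ⟨he, _, h1⟩
    · intro d _ d' _ h
      have h1 := hinv _ _ (hg d)
      have h1' := hinv _ _ (hg d')
      have : g d = g d' := by
        have h2 := hgv d
        have h2' := hgv d'
        simp only [Sigma.mk.injEq, heq_eq_eq] at h
        apply Subtype.ext
        exact Prod.ext (h2.symm.trans h2') (Prod.ext h.1 h.2)
      rw [this, h1'] at h1
      simpa using h1.symm
    · rintro ⟨u, i⟩ h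
      simp only [Finset.mem_sigma, Finset.mem_univ, Finset.mem_filter, true_and] at h
      obtain ⟨he, ⟨v', d⟩, hc⟩ := h
      have h1 := M.adj_sub (hf (.inr ⟨(v, u, i), he⟩))
      rw [hc, gadget_adj_inr_inl] at h1
      obtain rfl : v' = v := h1
      refine ⟨d, Finset.mem_univ _, ?_⟩
      have h2 := hinv _ _ hc
      rw [hg d] at h2
      have h3 := Sum.inr_injective h2
      rw [h3]

/-! ### The structure of minimal barriers of the gadget -/

lemma IsBarrier.exists_unique_member {W : Type*} {H : SimpleGraph W}
    {X : Finset W} {F : Finset (Finset W)} (hb : IsBarrier H X F) (z : W) :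
    ∃ A, ∀ B ∈ F, z ∈ B → B = A := by
  by_cases h : ∃ A ∈ F, z ∈ A
  · obtain ⟨A, hA, hz⟩ := h
    exact ⟨A, fun B hB hzB => hb.disj B hB A hA z hzB hz⟩
  · exact ⟨∅, fun B hB hzB => (h ⟨B, hB, hzB⟩).elim⟩

section Barrier

variable {X : Finset (GadgetVert k ℓ mult)} {F : Finset (Finset (GadgetVert k ℓ mult))}

/-- A minimal barrier contains all copies of a vertex or none: a remaining copy has the same
neighbours as a deleted one, so these touch only its member. -/
lemma copies_mem (hb : IsBarrier (gadget k ℓ mult hsymm hloop) X F)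
    (hmin : ∀ X' F', IsBarrier (gadget k ℓ mult hsymm hloop) X' F' → X.card ≤ X'.card)
    {v : Fin n} {d : Fin k × Bool} (h : .inl (v, d) ∈ X) (d' : Fin k × Bool) :
    .inl (v, d') ∈ X := by
  by_contra hd
  obtain ⟨A, hA⟩ := hb.exists_unique_member (.inl (v, d'))
  refine hb.not_touch_one hmin h A ?_
  rintro (c | e) hy B hB hyB
  · exact (gadget_adj_inl_inl hy).elim
  · rw [gadget_adj_inl_inr] at hy
    exact hA B hB ((hb.closed B hB _ hyB (.inl (v, d')) hy).resolve_right hd)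

/-- A minimal barrier contains all edge ends at a vertex or none: given a remaining end at `v`, the
neighbours of a deleted end at `v` touch at most the member of that remaining end and the member
of the opposite end. -/
lemma ends_mem (hb : IsBarrier (gadget k ℓ mult hsymm hloop) X F)
    (hmin : ∀ X' F', IsBarrier (gadget k ℓ mult hsymm hloop) X' F' → X.card ≤ X'.card)
    {e e' : EdgeEnd ℓ mult} (h : .inr e ∈ X) (hee : e'.1.1 = e.1.1) : .inr e' ∈ X := by
  by_contra he'
  obtain ⟨Z, hZ⟩ := hb.exists_unique_member (.inr e')
  obtain ⟨P, hP⟩ := hb.exists_unique_member (.inr (e.swap hsymm))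
  have hZ' : ∀ B ∈ F, ∀ c : Fin n × Fin k × Bool, c.1 = e.1.1 → .inl c ∈ B →
      .inr e' ∈ B := fun B hB c hc hcB =>
    (hb.closed B hB _ hcB (.inr e') (hc.trans hee.symm)).resolve_right he'
  by_cases h1 : Z ∈ F ∧ .inr e' ∈ Z ∧ P ∈ F ∧ .inr (e.swap hsymm) ∈ P ∧ Z ≠ P
  · obtain ⟨h1, h2, h3, h4, h5⟩ := h1
    refine hb.not_touch_two hmin h h1 h3 h5 ?_
    rintro (c | e₁) hy
    · rw [gadget_adj_inr_inl] at hy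
      have := hb.closed Z h1 _ h2 (.inl c) (hy.trans hee.symm)
      tauto
    · rw [gadget_adj_inr_inr] at hy
      subst hy
      tauto
  · by_cases h2 : Z ∈ F ∧ .inr e' ∈ Z
    · refine hb.not_touch_one hmin h Z ?_
      rintro (c | e₁) hy B hB hyB
      · exact hZ B hB (hZ' B hB c hy hyB)
      · rw [gadget_adj_inr_inr] at hy
        subst hy
        have := hP B hB hyB
        subst this
        by_contra hne
        exact h1 ⟨h2.1, h2.2, hB, hyB, fun h => hne h.symm⟩
    · refine hb.not_touch_one hmin h P ?_
      rintro (c | e₁) hy B hB hyB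
      · have h3 := hZ' B hB c hy hyB
        have := hZ B hB h3
        subst this
        exact (h2 ⟨hB, h3⟩).elim
      · rw [gadget_adj_inr_inr] at hy
        subst hy
        exact hP B hB hyB

/-- A minimal barrier does not contain both copies of and edge ends at the same vertex: with all
copies deleted, an edge end has just one neighbour left. -/
lemma copies_notMem (hb : IsBarrier (gadget k ℓ mult hsymm hloop) X F)
    (hmin : ∀ X' F', IsBarrier (gadget k ℓ mult hsymm hloop) X' F' → X.card ≤ X'.card)
    {e : EdgeEnd ℓ mult} (h : .inr e ∈ X) (d : Fin k × Bool) : .inl (e.1.1, d) ∉ X := by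
  intro hd
  obtain ⟨P, hP⟩ := hb.exists_unique_member (.inr (e.swap hsymm))
  refine hb.not_touch_one hmin h P ?_
  rintro (⟨v, d'⟩ | e₁) hy B hB hyB
  · rw [gadget_adj_inr_inl] at hy
    dsimp only at hy
    subst hy
    exact (hb.notMem B hB _ hyB (copies_mem hb hmin hd d')).elim
  · rw [gadget_adj_inr_inr] at hy
    subst hy
    exact hP B hB hyB

/-- The sufficiency direction of the factor theorem for the even degree `2 * k`. The odd components
outside `S ∪ T` are represented by a family `Q` of disjoint nonempty sets with no edges leaving
them except to `S ∪ T`, of which only the properties needed later are recorded. -/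
lemma exists_deficient (hcap : ∀ u v, mult u v ≤ ℓ) (hk : 0 < k)
    (hpos : ∀ v, 0 < ∑ u, mult v u)
    (hno : ∀ M : (gadget k ℓ mult hsymm hloop).Subgraph, ¬ M.IsPerfectMatching) :
    ∃ (S T : Finset (Fin n)) (Q : Finset (Finset (Fin n))), Disjoint S T ∧
      (∀ C ∈ Q, C.Nonempty ∧ (∀ v ∈ C, v ∉ S ∧ v ∉ T) ∧
        ∀ v ∈ C, ∀ u, 0 < mult v u → u ∈ C ∨ u ∈ S ∨ u ∈ T) ∧
      (∀ C ∈ Q, ∀ D ∈ Q, ∀ v, v ∈ C → v ∈ D → C = D) ∧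
      Q.card ≤ ∑ v ∈ T, ∑ u, (if u ∈ S then 0 else mult v u) ∧
      2 * k * S.card + ∑ v ∈ T, ∑ u, (if u ∈ S then 0 else mult v u) < 2 * k * T.card + Q.card := by
  classical
  obtain ⟨X, F, hb, hmin⟩ : ∃ X F, IsBarrier (gadget k ℓ mult hsymm hloop) X F ∧
      ∀ X' F', IsBarrier (gadget k ℓ mult hsymm hloop) X' F' → X.card ≤ X'.card := by
    have hex : ∃ m X F, IsBarrier (gadget k ℓ mult hsymm hloop) X F ∧ X.card = m := by
      obtain ⟨X, F, hb⟩ := exists_isBarrier _ hno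
      exact ⟨_, X, F, hb, rfl⟩
    obtain ⟨X, F, hb, hc⟩ := Nat.find_spec hex
    exact ⟨X, F, hb, fun X' F' hb' => hc ▸ Nat.find_min' hex ⟨X', F', hb', rfl⟩⟩
  have : Nonempty (Fin k × Bool) := ⟨(⟨0, hk⟩, false)⟩
  let d₀ : Fin k × Bool := (⟨0, hk⟩, false)
  set S : Finset (Fin n) := Finset.univ.filter fun v => .inl (v, d₀) ∈ X with hS
  set T : Finset (Fin n) := Finset.univ.filter fun v => ∃ e : EdgeEnd ℓ mult, e.1.1 = v ∧
    .inr e ∈ X with hT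
  have hSX : ∀ c : Fin n × Fin k × Bool, .inl c ∈ X ↔ c.1 ∈ S := by
    rintro ⟨v, d⟩
    simp only [hS, Finset.mem_filter, Finset.mem_univ, true_and]
    exact ⟨fun h => copies_mem hb hmin h _, fun h => copies_mem hb hmin h _⟩
  have hTX : ∀ e : EdgeEnd ℓ mult, .inr e ∈ X ↔ e.1.1 ∈ T := by
    intro e
    simp only [hT, Finset.mem_filter, Finset.mem_univ, true_and]
    constructor
    · intro h
      exact ⟨e, rfl, h⟩
    · rintro ⟨e', he, h⟩
      exact ends_mem hb hmin h he.symm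
  have hST : Disjoint S T := by
    rw [Finset.disjoint_left]
    intro v hvS hvT
    simp only [hT, Finset.mem_filter, Finset.mem_univ, true_and] at hvT
    obtain ⟨e, rfl, he⟩ := hvT
    exact copies_notMem hb hmin he d₀ ((hSX (e.1.1, d₀)).2 hvS)
  have hcopies : ∀ R : Finset (Fin n),
      (Finset.univ.filter fun c : Fin n × Fin k × Bool => c.1 ∈ R).card = 2 * k * R.card := by
    intro R
    have : (Finset.univ.filter fun c : Fin n × Fin k × Bool => c.1 ∈ R) = R ×ˢ Finset.univ := by
      ext c; simp
    rw [this, Finset.card_product, Finset.card_univ, Fintype.card_prod, Fintype.card_fin,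
      Fintype.card_bool]
    ring
  have hXcard : X.card = 2 * k * S.card + ∑ v ∈ T, ∑ u, mult v u := by
    have : X = (Finset.univ.filter fun c : Fin n × Fin k × Bool => c.1 ∈ S).disjSum
        (Finset.univ.filter fun e : EdgeEnd ℓ mult => e.1.1 ∈ T) := by
      ext (c | e)
      · simp [hSX]
      · simp only [hTX, Finset.inr_mem_disjSum, Finset.mem_filter, Finset.mem_univ, true_and]
    rw [this, Finset.card_disjSum, hcopies, card_edgeEnd hcap (fun v _ => v ∈ T)]
    congr 1
    rw [← Finset.sum_filter_add_sum_filter_not Finset.univ (· ∈ T), Finset.filter_mem_eq_inter,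
      Finset.univ_inter]
    rw [Finset.sum_congr rfl fun v hv => Finset.sum_congr rfl fun u _ => if_pos hv]
    rw [Finset.sum_eq_zero (s := Finset.univ.filter fun v => v ∉ T)]
    · simp
    · intro v hv
      exact Finset.sum_eq_zero fun u _ => if_neg (Finset.mem_filter.1 hv).2
  -- The vertices of `H - X` that account for the terms `2 * k * #T` and `e(S, T)`.
  set P : Finset (GadgetVert k ℓ mult) :=
    (Finset.univ.filter fun c : Fin n × Fin k × Bool => c.1 ∈ T).disjSum
      (Finset.univ.filter fun e : EdgeEnd ℓ mult => e.1.1 ∈ S ∧ e.1.2.1 ∈ T) with hP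
  have hsplit : (∑ v ∈ T, ∑ u, if u ∈ S then 0 else mult v u) + (∑ v, ∑ u,
      if v ∈ S ∧ u ∈ T then mult v u else 0) = ∑ v ∈ T, ∑ u, mult v u := by
    rw [Finset.sum_comm (s := Finset.univ) (t := Finset.univ)]
    have : ∀ v, (∑ u, if u ∈ S ∧ v ∈ T then mult u v else 0) =
        if v ∈ T then ∑ u, (if u ∈ S then mult v u else 0) else 0 := by
      intro v
      split_ifs with h
      · simp only [h, and_true, hsymm v]
      · simp [h]
    rw [Finset.sum_congr rfl fun v _ => this v, ← Finset.sum_filter, Finset.filter_mem_eq_inter,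
      Finset.univ_inter, ← Finset.sum_add_distrib]
    refine Finset.sum_congr rfl fun v _ => ?_
    rw [← Finset.sum_add_distrib]
    refine Finset.sum_congr rfl fun u _ => ?_
    split_ifs <;> simp
  have hPcard : P.card = 2 * k * T.card +
      ∑ v, ∑ u, (if v ∈ S ∧ u ∈ T then mult v u else 0) := by
    rw [hP, Finset.card_disjSum, hcopies, card_edgeEnd hcap (fun v u => v ∈ S ∧ u ∈ T)]
  set F₁ := F.filter fun A => ∃ x ∈ A, x ∈ P with hF₁
  set F₂ := F.filter fun A => ¬ ∃ x ∈ A, x ∈ P with hF₂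
  have hF12 : F₁.card + F₂.card = F.card := Finset.card_filter_add_card_filter_not _
  have hF₁card : F₁.card ≤ P.card :=
    card_le_of_disjoint_meet F₁ P
      (fun A hA B hB => hb.disj A (Finset.mem_filter.1 hA).1 B (Finset.mem_filter.1 hB).1)
      (fun A hA => (Finset.mem_filter.1 hA).2)
  have hend : ∀ v, ∃ e : EdgeEnd ℓ mult, e.1.1 = v := by
    intro v
    obtain ⟨u, -, hu⟩ := Finset.exists_ne_zero_of_sum_ne_zero (hpos v).ne'
    exact ⟨⟨(v, u, ⟨0, by have := hcap v u; omega⟩), Nat.pos_of_ne_zero hu⟩, rfl⟩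
  -- Outside `S ∪ T` the gadget vertices at `v` stay together.
  have hcopy_end : ∀ A ∈ F, ∀ c : Fin n × Fin k × Bool, c.1 ∉ T → .inl c ∈ A →
      ∀ e : EdgeEnd ℓ mult, e.1.1 = c.1 → .inr e ∈ A := by
    intro A hA c hcT hc e he
    refine (hb.closed A hA _ hc (.inr e) he.symm).resolve_right fun h => ?_
    rw [hTX, he] at h
    exact hcT h
  have hend_copy : ∀ A ∈ F, ∀ e : EdgeEnd ℓ mult, e.1.1 ∉ S → .inr e ∈ A →
      ∀ c : Fin n × Fin k × Bool, e.1.1 = c.1 → .inl c ∈ A := by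
    intro A hA e heS he c hc
    refine (hb.closed A hA _ he (.inl c) hc.symm).resolve_right fun h => ?_
    rw [hSX, ← hc] at h
    exact heS h
  -- A member of `F₂` is odd, so the fixed-point-free involution cannot preserve it; it can only
  -- leave along an edge to `T`.
  have hF₂end : ∀ A ∈ F₂, ∃ e : EdgeEnd ℓ mult, .inr e ∈ A ∧ e.1.1 ∉ S ∧ e.1.1 ∉ T ∧
      e.1.2.1 ∈ T := by
    intro A hA₂
    obtain ⟨hA, hAP⟩ := Finset.mem_filter.1 hA₂
    push Not at hAP
    by_contra! hcon
    refine Nat.not_even_iff_odd.2 (hb.odd A hA) (even_card_of_invol A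
      (Sum.map (fun c => (c.1, c.2.1, !c.2.2)) (EdgeEnd.swap hsymm)) ?_ ?_ ?_)
    · rintro (c | e)
      · simp
      · rfl
    · rintro (c | e) - h
      · simp only [Sum.map_inl, Sum.inl.injEq, Prod.ext_iff] at h
        simp at h
      · simp only [Sum.map_inr, Sum.inr.injEq, Subtype.ext_iff, EdgeEnd.swap, Prod.ext_iff] at h
        exact e.fst_ne hloop h.2.1
    · rintro (c | e) hx
      · have hcS : c.1 ∉ S := fun h => hb.notMem A hA _ hx ((hSX c).2 h)
        have hcT : c.1 ∉ T := fun h => hAP _ hx (by simpa [hP] using h)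
        obtain ⟨e, he⟩ := hend c.1
        exact hend_copy A hA e (he ▸ hcS) (hcopy_end A hA c hcT hx e he) _ he
      · refine (hb.closed A hA _ hx (.inr (e.swap hsymm)) rfl).resolve_right fun h => ?_
        rw [hTX] at h
        have heT : e.1.1 ∉ T := fun h => hb.notMem A hA _ hx ((hTX e).2 h)
        have heS : e.1.1 ∉ S := fun h' => hAP _ hx (by
          rw [hP, Finset.inr_mem_disjSum, Finset.mem_filter]
          exact ⟨Finset.mem_univ _, h', h⟩)
        exact hcon e hx heS heT h
  -- The vertices of the multigraph whose gadget vertices lie in `A`.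
  let base : Finset (GadgetVert k ℓ mult) → Finset (Fin n) := fun A =>
    Finset.univ.filter fun v => v ∉ S ∧ v ∉ T ∧ .inl (v, d₀) ∈ A
  have hbase : ∀ A v, v ∈ base A ↔ v ∉ S ∧ v ∉ T ∧ .inl (v, d₀) ∈ A := by
    intro A v; simp [base]
  have hne : ∀ A ∈ F₂, (base A).Nonempty := by
    intro A hA
    obtain ⟨e, he, heS, heT, -⟩ := hF₂end A hA
    exact ⟨e.1.1, (hbase _ _).2 ⟨heS, heT,
      hend_copy A (Finset.mem_filter.1 hA).1 e heS he (e.1.1, d₀) rfl⟩⟩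
  have hdisj : ∀ A ∈ F₂, ∀ B ∈ F₂, ∀ v, v ∈ base A → v ∈ base B → A = B := by
    intro A hA B hB v hvA hvB
    exact hb.disj A (Finset.mem_filter.1 hA).1 B (Finset.mem_filter.1 hB).1 _
      ((hbase _ _).1 hvA).2.2 ((hbase _ _).1 hvB).2.2
  have hQcard : (F₂.image base).card = F₂.card := by
    refine Finset.card_image_of_injOn fun A hA B hB hAB => ?_
    obtain ⟨v, hv⟩ := hne A hA
    exact hdisj A hA B hB v hv (hAB ▸ hv)
  refine ⟨S, T, F₂.image base, hST, ?_, ?_, ?_, ?_⟩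
  · intro C hC
    obtain ⟨A, hA₂, rfl⟩ := Finset.mem_image.1 hC
    have hA := (Finset.mem_filter.1 hA₂).1
    refine ⟨hne A hA₂, fun v hv => ⟨((hbase _ _).1 hv).1, ((hbase _ _).1 hv).2.1⟩, ?_⟩
    intro v hv u huv
    obtain ⟨hvS, hvT, hvA⟩ := (hbase _ _).1 hv
    by_cases huS : u ∈ S
    · exact Or.inr (Or.inl huS)
    by_cases huT : u ∈ T
    · exact Or.inr (Or.inr huT)
    left
    let e : EdgeEnd ℓ mult := ⟨(v, u, ⟨0, by have := hcap v u; omega⟩), huv⟩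
    have h1 : .inr e ∈ A := hcopy_end A hA _ hvT hvA e rfl
    have h2 : .inr (e.swap hsymm) ∈ A := by
      refine (hb.closed A hA _ h1 (.inr (e.swap hsymm)) rfl).resolve_right fun h => ?_
      rw [hTX] at h
      exact huT h
    exact (hbase _ _).2 ⟨huS, huT, hend_copy A hA (e.swap hsymm) huS h2 (u, d₀) rfl⟩
  · intro C hC D hD v hvC hvD
    obtain ⟨A, hA, rfl⟩ := Finset.mem_image.1 hC
    obtain ⟨B, hB, rfl⟩ := Finset.mem_image.1 hD
    rw [hdisj A hA B hB v hvC hvD]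
  · rw [hQcard]
    have h1 := card_le_of_disjoint_meet F₂
      ((Finset.univ.filter fun e : EdgeEnd ℓ mult => e.1.1 ∉ S ∧ e.1.2.1 ∈ T).map
        Function.Embedding.inr)
      (fun A hA B hB => hb.disj A (Finset.mem_filter.1 hA).1 B (Finset.mem_filter.1 hB).1)
      (fun A hA => by
        obtain ⟨e, he, heS, heT, heT'⟩ := hF₂end A hA
        exact ⟨.inr e, he, Finset.mem_map_of_mem _
          (Finset.mem_filter.2 ⟨Finset.mem_univ _, heS, heT'⟩)⟩)
    rw [Finset.card_map, card_edgeEnd hcap (fun v u => v ∉ S ∧ u ∈ T)] at h1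
    refine h1.trans (le_of_eq ?_)
    rw [Finset.sum_comm]
    have : ∀ v, (∑ u, if u ∉ S ∧ v ∈ T then mult u v else 0) =
        if v ∈ T then ∑ u, (if u ∈ S then 0 else mult v u) else 0 := by
      intro v
      split_ifs with h
      · simp only [h, and_true, hsymm v, ite_not]
      · simp [h]
    rw [Finset.sum_congr rfl fun v _ => this v, ← Finset.sum_filter, Finset.filter_mem_eq_inter,
      Finset.univ_inter]
  · rw [hQcard]
    have := hb.lt
    omega

end Barrier

end Gadget

/-! ### The deficiency estimate -/

/-- Few components: `q` disjoint subsets of `n - s - t` vertices, each so large that its vertices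
can have degree `δ`, number at most `max 1 (s + t)` when `2 * δ ≥ ℓ * n`. -/
lemma component_bound (n ℓ δ s t q : ℤ) (hℓ : 1 ≤ ℓ) (hδ : ℓ * n ≤ 2 * δ)
    (hn : s + t + q ≤ n)
    (hcomp : q * (δ + ℓ) ≤ ℓ * (q * (s + t)) + ℓ * (n - s - t)) :
    q ≤ 1 ∨ q ≤ s + t := by
  by_contra! hcon
  obtain ⟨h1, h2⟩ := hcon
  have h3 : ℓ * (s + t) ≤ ℓ * (q - 1) := by apply mul_le_mul_of_nonneg_left <;> omega
  by_cases hY : 0 ≤ δ - ℓ * (s + t)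
  · have h4 : (q - 2) * (δ - ℓ * (s + t)) ≥ 0 := mul_nonneg (by omega) hY
    nlinarith
  · have h5 : ℓ * (s + t + q) ≤ ℓ * n := mul_le_mul_of_nonneg_left hn (by omega)
    nlinarith

/-- The inequality of the factor theorem, from the degree bound `δ`: here `E` is the number of
pairs (edge, endpoint in `T`) over the edges not meeting `S`, and `q` the number of odd sets. -/
lemma deficiency_bound (n ℓ δ r s t q E : ℤ) (hℓ : 1 ≤ ℓ) (hδ : ℓ * n ≤ 2 * δ)
    (hδn : δ + ℓ ≤ ℓ * n) (hr2 : 2 ≤ r)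
    (hr : δ ≤ 2 * r → (2 * r - δ) ^ 2 ≤ ℓ * n * (2 * δ - ℓ * n))
    (hs : 0 ≤ s) (ht : 0 ≤ t) (hq : 0 ≤ q) (hn : s + t + q ≤ n)
    (hqE : q ≤ E) (hE : t * (δ - ℓ * s) ≤ E)
    (hcomp : q * (δ + ℓ) ≤ ℓ * (q * (s + t)) + ℓ * (n - s - t)) :
    q + r * t ≤ E + r * s := by
  rcases le_or_gt t s with hst | hst
  · nlinarith
  have hδr : r < δ := by
    by_contra! h
    have h1 := hr (by nlinarith)
    have h2 : δ ^ 2 ≤ (2 * r - δ) ^ 2 := by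
      apply pow_le_pow_left₀ <;> nlinarith
    nlinarith [mul_self_nonneg (ℓ * n - δ)]
  have hqw := component_bound n ℓ δ s t q hℓ hδ hn hcomp
  have hqw' : q ≤ s + t := by omega
  suffices h : q ≤ t * (δ - r) + s * (r - ℓ * t) by nlinarith
  rcases lt_trichotomy (ℓ * t) r with h | h | h
  · have h1 : t * 1 ≤ t * (δ - r) := mul_le_mul_of_nonneg_left (by omega) ht
    have h2 : s * 1 ≤ s * (r - ℓ * t) := mul_le_mul_of_nonneg_left (by omega) hs
    omega
  · rw [h, sub_self, mul_zero, add_zero]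
    by_cases h2 : r + 2 ≤ δ
    · have h1 : t * 2 ≤ t * (δ - r) := mul_le_mul_of_nonneg_left (by omega) ht
      omega
    -- Only `δ = r + 1 = ℓ * t + 1` is left, where the bound on `r` makes `n - t` too small.
    obtain rfl : δ = r + 1 := by omega
    by_contra! hcon
    rw [show t * (r + 1 - r) = t by ring] at hcon
    have hs1 : 1 ≤ s := by omega
    have h3 := hr (by omega)
    have h4 : ℓ * (s + t + (t + 1)) ≤ ℓ * n := mul_le_mul_of_nonneg_left (by omega) (by omega)
    have h6 : ℓ * 1 ≤ ℓ * s := mul_le_mul_of_nonneg_left hs1 (by omega)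
    have h5 : r + 1 ≤ ℓ * n - (r + 1) := by nlinarith
    have h7 : (r + 1) ^ 2 ≤ (ℓ * n - (r + 1)) ^ 2 := by
      apply pow_le_pow_left₀ <;> omega
    nlinarith
  · by_cases h2 : δ ≤ 2 * r
    · -- Multiplied by `4 * ℓ`, the expression at `s = n - t` is a square minus a discriminant.
      have h3 := hr h2
      have h4 : q * 1 ≤ (n - s - t) * (ℓ * t - r) :=
        mul_le_mul (by omega) (by omega) (by omega) (by omega)
      have h5 : 0 ≤ ℓ * (n * r + t * (δ - 2 * r - ℓ * n) + ℓ * t ^ 2) := by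
        nlinarith [sq_nonneg (2 * (ℓ * t) + (δ - 2 * r - ℓ * n))]
      have h6 : 0 ≤ n * r + t * (δ - 2 * r - ℓ * n) + ℓ * t ^ 2 :=
        nonneg_of_mul_nonneg_right h5 (by omega)
      nlinarith
    · by_cases h3 : δ + 2 ≤ 2 * (ℓ * t)
      · have h4 : q * 2 ≤ (n - s - t) * (2 * (ℓ * t) - δ) :=
          mul_le_mul (by omega) (by omega) (by omega) (by omega)
        -- The bound decreases in `r` since `s < t`, so it is enough to treat `r = δ / 2`.
        have h5 : 0 ≤ (t - s) * (δ - 2 * r) := mul_nonneg (by omega) (by omega)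
        have h7 : 0 ≤ ℓ * (n * δ - 2 * t * (ℓ * n) + 2 * ℓ * t ^ 2) := by
          nlinarith [sq_nonneg (2 * (ℓ * t) - ℓ * n), mul_nonneg (show 0 ≤ ℓ * n by omega)
            (show 0 ≤ 2 * δ - ℓ * n by omega)]
        have h6 : 0 ≤ n * δ - 2 * t * (ℓ * n) + 2 * ℓ * t ^ 2 :=
          nonneg_of_mul_nonneg_right h7 (by omega)
        nlinarith
      · have h4 : s * (2 * (ℓ * t)) ≤ s * (δ + 1) := mul_le_mul_of_nonneg_left (by omega) hs
        have h5 : 0 ≤ (t - s) * (δ - 1 - 2 * r) := mul_nonneg (by omega) (by omega)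
        have h6 : t * 5 ≤ t * δ := mul_le_mul_of_nonneg_left (by omega) ht
        nlinarith

/-! ### The factor theorem under the degree condition -/

/-- Let `G` be a loopless multigraph on `n` vertices (given by an edge-multiplicity
function `mult`), in which every pair of vertices is joined by at most `ℓ` edges,
with minimum degree `δ ≥ ℓn/2` (degrees counting multiplicity). Let `r` be an even
positive integer with `r ≤ (δ + √(ℓn(2δ - ℓn)))/2`. Then `G` contains an `r`-factor,
i.e. a spanning submultigraph in which every vertex has degree exactly `r`. -/
theorem stmt_6 (n ℓ δ : ℕ) (hn : 0 < n) (hℓ : 1 ≤ ℓ)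
    (mult : Fin n → Fin n → ℕ)
    (hsymm : ∀ u v, mult u v = mult v u) (hloop : ∀ v, mult v v = 0)
    (hcap : ∀ u v, mult u v ≤ ℓ)
    (hmin : ∀ v, δ ≤ ∑ u, mult v u) (hex : ∃ v, ∑ u, mult v u = δ)
    (hδ : ℓ * n ≤ 2 * δ)
    (r : ℕ) (hreven : Even r) (hrpos : 0 < r)
    (hr : (r : ℝ) ≤ ((δ : ℝ) + Real.sqrt ((ℓ * n * (2 * δ - ℓ * n) : ℕ) : ℝ)) / 2) :
    ∃ mult' : Fin n → Fin n → ℕ,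
      (∀ u v, mult' u v ≤ mult u v) ∧
      (∀ u v, mult' u v = mult' v u) ∧
      (∀ v, ∑ u, mult' v u = r) := by
  classical
  obtain ⟨k, hk⟩ := hreven
  obtain rfl : r = 2 * k := by omega
  have hsum_le : ∀ (v : Fin n) (R : Finset (Fin n)), (∀ u, 0 < mult v u → u ∈ R) →
      δ ≤ R.card * ℓ := by
    intro v R hR
    calc δ ≤ ∑ u, mult v u := hmin v
      _ = ∑ u ∈ R, mult v u := by
        symm
        refine Finset.sum_subset (Finset.subset_univ _) fun u _ hu => ?_
        by_contra h
        exact hu (hR u (Nat.pos_of_ne_zero h))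
      _ ≤ ∑ _u ∈ R, ℓ := Finset.sum_le_sum fun u _ => hcap v u
      _ = R.card * ℓ := by simp
  have hne_self : ∀ v u, 0 < mult v u → u ≠ v := by
    rintro v u h rfl
    rw [hloop] at h
    omega
  have hδn : δ + ℓ ≤ ℓ * n := by
    have h := hsum_le ⟨0, hn⟩ (Finset.univ.erase ⟨0, hn⟩) fun u hu => by
      simpa using hne_self _ _ hu
    rw [Finset.card_erase_of_mem (Finset.mem_univ _), Finset.card_univ, Fintype.card_fin] at h
    obtain ⟨m, rfl⟩ : ∃ m, n = m + 1 := ⟨n - 1, by omega⟩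
    rw [Nat.add_sub_cancel] at h
    nlinarith
  have hδpos : 0 < δ := by
    have := Nat.mul_pos hℓ hn
    omega
  have hrZ : (δ : ℤ) ≤ 2 * ((2 * k : ℕ) : ℤ) →
      (2 * ((2 * k : ℕ) : ℤ) - δ) ^ 2 ≤ ℓ * n * (2 * δ - ℓ * n) := by
    intro h
    have h1 : (2 * ((2 * k : ℕ) : ℝ) - δ) ≤
        Real.sqrt ((ℓ * n * (2 * δ - ℓ * n) : ℕ) : ℝ) := by linarith
    have h0 : (0 : ℝ) ≤ 2 * ((2 * k : ℕ) : ℝ) - δ := by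
      have : ((δ : ℤ) : ℝ) ≤ ((2 * ((2 * k : ℕ) : ℤ) : ℤ) : ℝ) := Int.cast_le.2 h
      push_cast at this ⊢
      linarith
    have h2 := (Real.le_sqrt h0 (Nat.cast_nonneg _)).1 h1
    rw [Nat.cast_mul (ℓ * n), Nat.cast_sub hδ] at h2
    push_cast at h2 ⊢
    exact_mod_cast h2
  by_contra hfac
  obtain ⟨S, T, Q, hST, hQ, hQd, hQE, hlt⟩ :=
    exists_deficient (k := k) (hsymm := hsymm) (hloop := hloop) hcap (by omega)
      (fun v => hδpos.trans_le (hmin v))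
      (fun M hM => hfac (factor_of_isPerfectMatching M hM))
  set E := ∑ v ∈ T, ∑ u, (if u ∈ S then 0 else mult v u) with hE
  have hSTc : (S ∪ T).card = S.card + T.card := Finset.card_union_of_disjoint hST
  have hcompl : S.card + T.card + ((S ∪ T)ᶜ).card = n := by
    rw [← hSTc, Finset.card_add_card_compl, Fintype.card_fin]
  have hQn : S.card + T.card + Q.card ≤ n := by
    have h := card_le_of_disjoint_meet Q (S ∪ T)ᶜ hQd fun C hC => by
      obtain ⟨v, hv⟩ := (hQ C hC).1
      refine ⟨v, hv, ?_⟩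
      have := (hQ C hC).2.1 v hv
      simpa using this
    omega
  have hCcard : ∀ C ∈ Q, δ + ℓ ≤ (C.card + S.card + T.card) * ℓ := by
    intro C hC
    obtain ⟨⟨v, hv⟩, -, hcl⟩ := hQ C hC
    have h := hsum_le v (C.erase v ∪ (S ∪ T)) fun u hu => by
      have h1 := hcl v hv u hu
      have h2 := hne_self v u hu
      simp only [Finset.mem_union, Finset.mem_erase]
      tauto
    have h3 := Finset.card_union_le (C.erase v) (S ∪ T)
    rw [Finset.card_erase_of_mem hv, hSTc] at h3
    have h4 := Finset.card_pos.2 ⟨v, hv⟩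
    have h5 : (C.erase v ∪ (S ∪ T)).card + 1 ≤ C.card + S.card + T.card := by omega
    nlinarith
  have hQsum : ∑ C ∈ Q, C.card ≤ ((S ∪ T)ᶜ).card := by
    have h1 : (Q.biUnion id).card = ∑ C ∈ Q, C.card := by
      refine Finset.card_biUnion fun C hC D hD hCD => ?_
      exact Finset.disjoint_left.2 fun v hv hv' => hCD (hQd C hC D hD v hv hv')
    rw [← h1]
    refine Finset.card_le_card fun v hv => ?_
    obtain ⟨C, hC, hvC⟩ := Finset.mem_biUnion.1 hv
    have := (hQ C hC).2.1 v hvC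
    simpa using this
  have hcomp : Q.card * (δ + ℓ) ≤
      (((S ∪ T)ᶜ).card + Q.card * (S.card + T.card)) * ℓ := by
    calc Q.card * (δ + ℓ) = ∑ _C ∈ Q, (δ + ℓ) := by simp
      _ ≤ ∑ C ∈ Q, (C.card + S.card + T.card) * ℓ := Finset.sum_le_sum hCcard
      _ = (∑ C ∈ Q, C.card + Q.card * (S.card + T.card)) * ℓ := by
        rw [← Finset.sum_mul, Finset.sum_add_distrib, Finset.sum_add_distrib]
        simp only [Finset.sum_const, smul_eq_mul]
        ring
      _ ≤ _ := by gcongr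
  have hEbound : T.card * δ ≤ E + T.card * (S.card * ℓ) := by
    calc T.card * δ = ∑ _v ∈ T, δ := by simp
      _ ≤ ∑ v ∈ T, ((∑ u, if u ∈ S then 0 else mult v u) + S.card * ℓ) := by
        refine Finset.sum_le_sum fun v _ => (hmin v).trans ?_
        have h1 : ∑ u, mult v u = (∑ u, if u ∈ S then 0 else mult v u) +
            ∑ u, if u ∈ S then mult v u else 0 := by
          rw [← Finset.sum_add_distrib]
          refine Finset.sum_congr rfl fun u _ => ?_
          split_ifs <;> simp
        rw [h1, ← Finset.sum_filter, Finset.filter_mem_eq_inter, Finset.univ_inter]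
        have h2 : ∑ u ∈ S, mult v u ≤ S.card * ℓ := by
          simpa using Finset.sum_le_sum fun u (_ : u ∈ S) => hcap v u
        omega
      _ = E + T.card * (S.card * ℓ) := by
        rw [Finset.sum_add_distrib]
        simp [hE]
  have hfin := deficiency_bound n ℓ δ (2 * k : ℕ) S.card T.card Q.card E
    (by exact_mod_cast hℓ) (by exact_mod_cast hδ) (by exact_mod_cast hδn) (by omega) hrZ
    (by positivity) (by positivity) (by positivity) (by exact_mod_cast hQn)
    (by exact_mod_cast hQE)
    (by
      zify at hEbound
      linarith)
    (by
      zify at hcomp hcompl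
      have h : (((S ∪ T)ᶜ).card : ℤ) = n - S.card - T.card := by linarith
      rw [h] at hcomp
      linarith)
  have h1 : Q.card + 2 * k * T.card ≤ E + 2 * k * S.card := by exact_mod_cast hfin
  omega
end

section
/- Let 0 < ξ < 1/9 and let G be a loopless multigraph on n vertices (n sufficiently large) in which every pair of vertices is joined by at most ℓ edges. Suppose the minimum degree δ and maximum degree Δ satisfy (1/2 + ξ)ℓn ≤ Δ ≤ δ + ξ²ℓn and δ ≥ ℓn/2. Then for every even positive integer r ≤ δ − ξℓn, G contains an r-factor. -/
/-!
Write `r = 2s`. If the edges of `G` are oriented so that `c u v` of the `mult u v` parallel edges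
go from `u` to `v`, and some `M ≤ c` has all row and column sums equal to `s`, then `M + Mᵀ` is an
`r`-factor. So it suffices to find an orientation whose bipartite double cover (out-copies against
in-copies of the vertices) has an `s`-factor.

* `exists_bipartite_factor` is the capacitated Hall (Ore–Ryser) criterion: such an `M` exists as
  soon as `s (|A| + |B| - n) ≤ c(A, B)` for all vertex sets `A`, `B`. It is proved by uncrossing
  tight pairs for a minimal `c`.
* `exists_orientation` orients the edges at random, pairing off parallel edges in opposite
  directions so that only one edge of each odd bundle is random. A Chernoff bound and a union
  bound over the pairs with `|A| ≤ |B|`, `|A| + |B| > n` show that some orientation satisfies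
  `|2 c(A, B) - mult(A, B)| ≤ κ n |A|` for all of them, once `n` is large in terms of `κ`.
* `slack_bound` shows that the degree hypotheses give
  `mult(A, B) - r (|A| + |B| - n) ≥ (ξ² / 30) n |A|` for those pairs, which absorbs the error of the
  orientation with `κ = ξ² / 30`.
-/

open Finset

/-! ### Factors of capacitated bipartite graphs -/

/-- The total weight `c(A, B) = ∑_{u ∈ A, v ∈ B} c u v`. -/
def wt {V : Type*} (c : V → V → ℕ) (A B : Finset V) : ℕ := ∑ u ∈ A, ∑ v ∈ B, c u v

theorem wt_eq {V : Type*} [Fintype V] [DecidableEq V] (c : V → V → ℕ) (A B : Finset V) :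
    wt c A B = ∑ u, ∑ v, if u ∈ A ∧ v ∈ B then c u v else 0 := by
  unfold wt
  simp only [ite_and]
  rw [← Finset.sum_filter_add_sum_filter_not univ (fun u => u ∈ A)]
  rw [Finset.sum_eq_zero (s := univ.filter (fun u => ¬ u ∈ A)), add_zero]
  · rw [Finset.filter_univ_mem]
    refine Finset.sum_congr rfl fun u hu => ?_
    simp [hu, Finset.sum_ite_mem]
  · intro u hu
    simp only [Finset.mem_filter] at hu
    simp [hu.2]

theorem wt_uncross {V : Type*} [Fintype V] [DecidableEq V] (c : V → V → ℕ)
    (A A' B B' : Finset V) :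
    wt c (A ∩ A') (B ∪ B') + wt c (A ∪ A') (B ∩ B') ≤ wt c A B + wt c A' B' := by
  simp only [wt_eq, ← Finset.sum_add_distrib]
  refine Finset.sum_le_sum fun u _ => Finset.sum_le_sum fun v _ => ?_
  by_cases h1 : u ∈ A <;> by_cases h2 : u ∈ A' <;> by_cases h3 : v ∈ B <;>
    by_cases h4 : v ∈ B' <;> simp [h1, h2, h3, h4]

/-- The cut condition for a bipartite `s`-factor below `c`, arranged to avoid subtraction. -/
def Cut {V : Type*} [Fintype V] (s : ℕ) (c : V → V → ℕ) : Prop :=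
  ∀ A B : Finset V, s * (#A + #B) ≤ s * Fintype.card V + wt c A B

/-- If no unit of `c` can be removed without violating the cut condition, every positive entry lies
in a tight pair, one for which the condition is an equality. The tight pairs
through the row of `x` uncross to one that contains the whole support of this row. -/
theorem row_sum_of_minimal {V : Type*} [Fintype V] [DecidableEq V] (s : ℕ) (c : V → V → ℕ)
    (hc : Cut s c)
    (hmin : ∀ x y, 0 < c x y → ∃ A B : Finset V, x ∈ A ∧ y ∈ B ∧
      s * (#A + #B) = s * Fintype.card V + wt c A B) (x : V) :
    ∑ v, c x v = s := by
  have key : ∀ Y : Finset V, (∀ y ∈ Y, 0 < c x y) → ∃ A B : Finset V, x ∈ A ∧ Y ⊆ B ∧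
      s * (#A + #B) = s * Fintype.card V + wt c A B := by
    intro Y
    induction Y using Finset.induction_on with
    | empty => exact fun _ => ⟨univ, ∅, by simp, by simp, by simp [wt]⟩
    | insert y Y hy ih =>
      intro hY
      obtain ⟨A, B, hA, hB, hT⟩ := ih fun z hz => hY z (by simp [hz])
      obtain ⟨A', B', hA', hB', hT'⟩ := hmin x y (hY y (by simp))
      refine ⟨A ∩ A', B ∪ B', by simp [hA, hA'], ?_, ?_⟩
      · intro z hz
        rcases Finset.mem_insert.1 hz with rfl | hz
        · simp [hB']
        · simp [hB hz]
      · have h1 := hc (A ∩ A') (B ∪ B')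
        have h2 := hc (A ∪ A') (B ∩ B')
        have h3 := wt_uncross c A A' B B'
        have h4 := Finset.card_inter_add_card_union A A'
        have h5 := Finset.card_union_add_card_inter B B'
        have h6 : s * (#(A ∩ A') + #(B ∪ B')) + s * (#(A ∪ A') + #(B ∩ B'))
            = s * (#A + #B) + s * (#A' + #B') := by
          rw [← mul_add, ← mul_add]; congr 1; omega
        omega
  obtain ⟨A, B, hA, hB, hT⟩ := key (univ.filter fun y => 0 < c x y) (by simp)
  have h1 := hc {x} univ
  have h2 := hc (A.erase x) B
  have h3 : wt c A B = ∑ v, c x v + wt c (A.erase x) B := by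
    unfold wt
    rw [← Finset.add_sum_erase A _ hA]
    congr 1
    refine Finset.sum_subset (Finset.subset_univ _) fun v _ hv => ?_
    by_contra h
    exact hv (hB (by simp; omega))
  have h4 := Finset.card_erase_add_one hA
  have h5 : wt c {x} univ = ∑ v, c x v := by simp [wt]
  rw [h5, card_singleton, card_univ] at h1
  rw [← h4] at hT
  simp only [mul_add, mul_one] at *
  omega

theorem exists_bipartite_factor {V : Type*} [Fintype V] [DecidableEq V] (s : ℕ)
    (c : V → V → ℕ) (hc : Cut s c) :
    ∃ M : V → V → ℕ, (∀ u v, M u v ≤ c u v) ∧ (∀ u, ∑ v, M u v = s) ∧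
      (∀ v, ∑ u, M u v = s) := by
  induction hN : (∑ u, ∑ v, c u v) using Nat.strong_induction_on generalizing c with
  | _ N ih =>
  by_cases hmin : ∀ x y, 0 < c x y → ∃ A B : Finset V, x ∈ A ∧ y ∈ B ∧
      s * (#A + #B) = s * Fintype.card V + wt c A B
  · have hrow := row_sum_of_minimal s c hc hmin
    refine ⟨c, fun _ _ => le_rfl, hrow, ?_⟩
    have hcol : ∀ v, s ≤ ∑ u, c u v := by
      intro v
      have := hc univ {v}
      simp only [wt, sum_singleton, card_singleton, card_univ, mul_add, mul_one] at this
      omega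
    have htot : ∑ v : V, s = ∑ v, ∑ u, c u v := by
      rw [Finset.sum_comm]; exact Finset.sum_congr rfl fun u _ => (hrow u).symm
    intro v
    exact ((Finset.sum_eq_sum_iff_of_le fun v _ => hcol v).1 htot v (mem_univ v)).symm
  · push Not at hmin
    obtain ⟨x, y, hxy, hT⟩ := hmin
    let c' : V → V → ℕ := fun u v => c u v - if u = x ∧ v = y then 1 else 0
    have hcc : ∀ u v, c u v = c' u v + if u = x ∧ v = y then 1 else 0 := by
      intro u v
      simp only [c']
      split_ifs with h
      · obtain ⟨rfl, rfl⟩ := h; omega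
      · rfl
    have hle : ∀ u v, c' u v ≤ c u v := fun u v => Nat.sub_le _ _
    have hwt : ∀ A B, wt c A B = wt c' A B + if x ∈ A ∧ y ∈ B then 1 else 0 := by
      intro A B
      unfold wt
      simp only [hcc, Finset.sum_add_distrib]
      congr 1
      simp [ite_and, Finset.sum_ite_eq']
    have hc' : Cut s c' := by
      intro A B
      have h1 := hc A B
      have h2 := hwt A B
      split_ifs at h2 with h
      · have := hT A B h.1 h.2
        omega
      · omega
    have hlt : ∑ u, ∑ v, c' u v < N := by
      have := hwt univ univ
      simp only [wt, mem_univ, and_self, if_true] at this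
      omega
    obtain ⟨M, h1, h2⟩ := ih _ hlt c' hc' rfl
    exact ⟨M, fun u v => (h1 u v).trans (hle u v), h2⟩

/-! ### A balanced orientation -/

/-- The sign `±1` encoded by a Boolean. -/
def sg (b : Bool) : ℝ := if b then 1 else -1

/-- Hoeffding's bound for the moment generating function of a signed sum. -/
theorem sum_exp_sign_le {ι : Type*} [Fintype ι] [DecidableEq ι] (x : ι → ℝ) :
    ∑ ω : ι → Bool, Real.exp (∑ i, x i * sg (ω i))
      ≤ Fintype.card (ι → Bool) * Real.exp (∑ i, x i ^ 2 / 2) := by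
  have h : ∑ ω : ι → Bool, Real.exp (∑ i, x i * sg (ω i))
      = ∏ i, (2 * Real.cosh (x i)) := by
    simp only [Real.exp_sum]
    rw [← Fintype.prod_sum (fun i (b : Bool) => Real.exp (x i * sg b))]
    refine Finset.prod_congr rfl fun i _ => ?_
    rw [Real.cosh_eq]
    simp [sg]
    ring
  rw [h, Real.exp_sum, Fintype.card_fun, Fintype.card_bool, Finset.prod_mul_distrib]
  simp only [Finset.prod_const, card_univ]
  push_cast
  gcongr with i
  exact Real.cosh_le_exp_half_sq _

/-- The contribution of the signs `ω` to the pair `u < v`; only the odd edge of the bundle is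
random. -/
def half {n : ℕ} (m : Fin n → Fin n → ℕ) (ω : Fin n × Fin n → Bool) (u v : Fin n) : ℝ :=
  if u < v then (m u v % 2 : ℕ) * sg (ω (u, v)) else 0

/-- The imbalance `2 c(A, B) - m(A, B)` of the orientation given by the signs `ω`. -/
def imb {n : ℕ} (m : Fin n → Fin n → ℕ) (ω : Fin n × Fin n → Bool) (A B : Finset (Fin n)) : ℝ :=
  ∑ u ∈ A, ∑ v ∈ B, (half m ω u v - half m ω v u)

/-- The coefficient of the sign of `i = (u, v)`, `u < v`, in the imbalance of `(A, B)`. -/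
def coef {n : ℕ} (m : Fin n → Fin n → ℕ) (A B : Finset (Fin n)) (i : Fin n × Fin n) : ℝ :=
  if i.1 < i.2 then (m i.1 i.2 % 2 : ℕ) *
    ((if i.1 ∈ A ∧ i.2 ∈ B then 1 else 0) - (if i.2 ∈ A ∧ i.1 ∈ B then 1 else 0)) else 0

theorem sum_ite_mem_pair {V : Type*} [Fintype V] [DecidableEq V] (f : V → V → ℝ)
    (A B : Finset V) :
    ∑ u ∈ A, ∑ v ∈ B, f u v = ∑ u, ∑ v, if u ∈ A ∧ v ∈ B then f u v else 0 := by
  rw [← Finset.sum_subset (Finset.subset_univ A)]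
  · refine Finset.sum_congr rfl fun u hu => ?_
    simp [hu, Finset.sum_ite_mem]
  · intro u _ hu
    simp [hu]

theorem imb_eq {n : ℕ} (m : Fin n → Fin n → ℕ) (ω : Fin n × Fin n → Bool)
    (A B : Finset (Fin n)) : imb m ω A B = ∑ i, coef m A B i * sg (ω i) := by
  unfold imb
  rw [sum_ite_mem_pair, Fintype.sum_prod_type]
  have h : ∀ u v, (if u ∈ A ∧ v ∈ B then half m ω u v - half m ω v u else 0)
      = (if u ∈ A ∧ v ∈ B then half m ω u v else 0)
        - (if u ∈ A ∧ v ∈ B then half m ω v u else 0) := by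
    intro u v; split_ifs <;> simp
  simp only [h, Finset.sum_sub_distrib]
  rw [Finset.sum_comm (f := fun u v => if u ∈ A ∧ v ∈ B then half m ω v u else 0),
    ← Finset.sum_sub_distrib]
  refine Finset.sum_congr rfl fun u _ => ?_
  rw [← Finset.sum_sub_distrib]
  refine Finset.sum_congr rfl fun v _ => ?_
  simp only [half, coef]
  split_ifs <;> ring

theorem sum_coef_sq_le {n : ℕ} (m : Fin n → Fin n → ℕ) (A B : Finset (Fin n)) :
    ∑ i, coef m A B i ^ 2 ≤ 2 * (#A * #B) := by
  have h1 : ∀ i : Fin n × Fin n, coef m A B i ^ 2 ≤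
      (if i.1 ∈ A ∧ i.2 ∈ B then 1 else 0) + (if i.2 ∈ A ∧ i.1 ∈ B then 1 else 0) := by
    intro i
    have h2 : ((m i.1 i.2 % 2 : ℕ) : ℝ) = 0 ∨ ((m i.1 i.2 % 2 : ℕ) : ℝ) = 1 := by
      rcases Nat.mod_two_eq_zero_or_one (m i.1 i.2) with h | h <;> simp [h]
    unfold coef
    rcases h2 with h2 | h2 <;> rw [h2] <;> split_ifs <;> norm_num
  refine (Finset.sum_le_sum fun i _ => h1 i).trans ?_
  rw [Finset.sum_add_distrib, Fintype.sum_prod_type, Fintype.sum_prod_type_right,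
    ← sum_ite_mem_pair (fun _ _ => 1) A B]
  simp
  linarith

/-- Chernoff's method: the exponential moment of the imbalance, with the threshold `κ n |A|`
subtracted and at the optimal parameter `κ / 2`. -/
theorem chernoff {n : ℕ} (m : Fin n → Fin n → ℕ) (κ : ℝ) (e : ℝ)
    (he : e ^ 2 = 1) (A B : Finset (Fin n)) :
    ∑ ω : Fin n × Fin n → Bool, Real.exp (κ / 2 * (e * imb m ω A B - κ * n * #A))
      ≤ Fintype.card (Fin n × Fin n → Bool) * Real.exp (-(κ ^ 2 * n / 4) * #A) := by
  have h := sum_exp_sign_le (fun i => κ / 2 * e * coef m A B i)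
  have h1 : ∀ ω, Real.exp (κ / 2 * (e * imb m ω A B - κ * n * #A))
      = Real.exp (∑ i, κ / 2 * e * coef m A B i * sg (ω i)) * Real.exp (-(κ ^ 2 * n / 2) * #A) := by
    intro ω
    rw [imb_eq, ← Real.exp_add]
    congr 1
    simp only [mul_assoc, ← Finset.mul_sum]
    ring
  simp only [h1]
  rw [← Finset.sum_mul]
  refine (mul_le_mul_of_nonneg_right h (Real.exp_pos _).le).trans ?_
  rw [mul_assoc, ← Real.exp_add]
  gcongr
  have h2 : ∑ i, (κ / 2 * e * coef m A B i) ^ 2 / 2 = κ ^ 2 / 8 * ∑ i, coef m A B i ^ 2 := by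
    rw [Finset.mul_sum]
    refine Finset.sum_congr rfl fun i _ => ?_
    rw [mul_pow, mul_pow, he]; ring
  rw [h2]
  have h3 := sum_coef_sq_le m A B
  have h4 : (#B : ℝ) ≤ n := by
    have := Finset.card_le_univ B
    rw [Fintype.card_fin] at this
    exact_mod_cast this
  have h5 : (#A : ℝ) * #B ≤ #A * n := by gcongr
  have h6 : κ ^ 2 / 8 * ∑ i, coef m A B i ^ 2 ≤ κ ^ 2 / 8 * (2 * (#A * n)) := by
    gcongr; linarith
  nlinarith

/-- The union bound over all pairs with `A` nonempty and `|Bᶜ| ≤ |A|`: since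
`|A| ≥ (|A| + |Bᶜ|) / 2`, the sum is dominated by a product of two binomial expansions. -/
theorem union_bound {n : ℕ} (α : ℝ) (hα : n * Real.exp (-α / 2) ≤ 1 / 10) :
    ∑ p ∈ (univ : Finset (Finset (Fin n) × Finset (Fin n))).filter
      (fun p => #p.1 ≤ #p.2 ∧ n < #p.1 + #p.2), Real.exp (-α * #p.1) ≤ 1 / 4 := by
  by_cases hn : n = 0
  · subst hn
    rw [Finset.sum_eq_zero]
    · norm_num
    · intro p hp
      have h1 := Finset.card_le_univ p.1
      have h2 := Finset.card_le_univ p.2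
      simp only [Finset.mem_filter, Fintype.card_fin] at hp h1 h2
      omega
  have hn1 : (1 : ℝ) ≤ n := by exact_mod_cast Nat.one_le_iff_ne_zero.2 hn
  set y := Real.exp (-α / 2) with hy
  have hy0 : 0 < y := Real.exp_pos _
  have hα0 : 0 ≤ α := by
    by_contra h
    have : 1 ≤ y := Real.one_le_exp (by linarith)
    nlinarith
  have hexp : ∑ A : Finset (Fin n), y ^ #A = (1 + y) ^ n := by
    have := Fintype.sum_pow_mul_eq_add_pow (Fin n) y 1
    simpa [add_comm] using this
  have hbin : (1 + y) ^ n ≤ 6 / 5 := by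
    have h1 : (1 + y) ^ n ≤ Real.exp (n * y) := by
      rw [Real.exp_nat_mul]
      gcongr
      linarith [Real.add_one_le_exp y]
    have h2 : Real.exp (n * y) ≤ 1 / (1 - n * y) := by
      rw [le_div_iff₀ (by linarith)]
      have := Real.add_one_le_exp (-(n * y))
      rw [Real.exp_neg] at this
      have h3 := Real.exp_pos (n * y)
      have h4 : Real.exp (n * y) * (-(n * y) + 1) ≤ Real.exp (n * y) * (Real.exp (n * y))⁻¹ :=
        mul_le_mul_of_nonneg_left this h3.le
      rw [mul_inv_cancel₀ h3.ne'] at h4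
      linarith
    have h3 : 1 / (1 - n * y) ≤ 6 / 5 := by
      rw [div_le_iff₀ (by linarith)]; linarith
    linarith
  calc _ ≤ ∑ p ∈ ((univ : Finset (Finset (Fin n))).erase ∅) ×ˢ (univ : Finset (Finset (Fin n))),
          y ^ #p.1 * y ^ #(p.2ᶜ) := by
        refine (Finset.sum_le_sum (g := fun p => y ^ #p.1 * y ^ #(p.2ᶜ)) ?_).trans
          (Finset.sum_le_sum_of_subset_of_nonneg ?_ ?_)
        · intro p hp
          simp only [Finset.mem_filter] at hp
          have h1 : #(p.2ᶜ) ≤ #p.1 := by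
            rw [Finset.card_compl, Fintype.card_fin]; omega
          have h2 : (#(p.2ᶜ) : ℝ) ≤ #p.1 := by exact_mod_cast h1
          rw [hy, ← Real.exp_nat_mul, ← Real.exp_nat_mul, ← Real.exp_add]
          apply Real.exp_le_exp.2
          nlinarith
        · intro p hp
          simp only [Finset.mem_filter, mem_univ, true_and] at hp
          simp only [Finset.mem_product, Finset.mem_erase, mem_univ, and_true]
          intro h
          rw [h] at hp
          have h2 := Finset.card_le_univ p.2
          simp only [card_empty, Fintype.card_fin] at hp h2
          omega
        · intro p _ _
          positivity
    _ = ((1 + y) ^ n - 1) * (1 + y) ^ n := by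
        rw [Finset.sum_product]
        simp only [← Finset.mul_sum]
        rw [← Finset.sum_mul]
        congr 1
        · rw [← hexp, ← Finset.add_sum_erase univ _ (mem_univ ∅)]
          simp
        · rw [← hexp]
          exact Fintype.sum_equiv compl_involutive.toPerm _ _ fun B => rfl
    _ ≤ 1 / 4 := by
        have h1 : 1 ≤ (1 + y) ^ n := one_le_pow₀ (by linarith)
        nlinarith

theorem exists_signs {n : ℕ} (m : Fin n → Fin n → ℕ) (κ : ℝ) (hκ : 0 < κ)
    (hn : n * Real.exp (-(κ ^ 2 * n / 4) / 2) ≤ 1 / 10) :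
    ∃ ω : Fin n × Fin n → Bool, ∀ A B : Finset (Fin n), #A ≤ #B → n < #A + #B →
      |imb m ω A B| ≤ κ * n * #A := by
  by_contra! hcon
  set P := (univ : Finset (Finset (Fin n) × Finset (Fin n))).filter
      (fun p => #p.1 ≤ #p.2 ∧ n < #p.1 + #p.2) with hP
  let F : ℝ → (Fin n × Fin n → Bool) → Finset (Fin n) × Finset (Fin n) → ℝ :=
    fun e ω p => Real.exp (κ / 2 * (e * imb m ω p.1 p.2 - κ * n * #p.1))
  have h1 : ∀ ω, (1 : ℝ) ≤ ∑ p ∈ P, (F 1 ω p + F (-1) ω p) := by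
    intro ω
    obtain ⟨A, B, hAB, hAB', hbad⟩ := hcon ω
    have hmem : (A, B) ∈ P := by simp [hP, hAB, hAB']
    refine le_trans ?_ (Finset.single_le_sum (f := fun p => F 1 ω p + F (-1) ω p) ?_ hmem)
    · have p1 : 0 < F 1 ω (A, B) := Real.exp_pos _
      have p2 : 0 < F (-1) ω (A, B) := Real.exp_pos _
      rcases lt_abs.1 hbad with h | h
      · have : 1 ≤ F 1 ω (A, B) := by
          apply Real.one_le_exp
          have : 0 ≤ 1 * imb m ω A B - κ * n * #A := by linarith
          positivity
        linarith
      · have : 1 ≤ F (-1) ω (A, B) := by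
          apply Real.one_le_exp
          have : 0 ≤ -1 * imb m ω A B - κ * n * #A := by linarith
          positivity
        linarith
    · intro p _
      exact (add_pos (Real.exp_pos _) (Real.exp_pos _)).le
  have h2 := Finset.sum_le_sum fun ω (_ : ω ∈ (univ : Finset (Fin n × Fin n → Bool))) => h1 ω
  rw [Finset.sum_comm] at h2
  have h3 : ∀ p ∈ P, ∑ ω, (F 1 ω p + F (-1) ω p) ≤
      2 * Fintype.card (Fin n × Fin n → Bool) * Real.exp (-(κ ^ 2 * n / 4) * #p.1) := by
    intro p _
    rw [Finset.sum_add_distrib]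
    have a := chernoff m κ 1 (by norm_num) p.1 p.2
    have b := chernoff m κ (-1) (by norm_num) p.1 p.2
    simp only [F]
    linarith
  have h4 := h2.trans (Finset.sum_le_sum h3)
  rw [← Finset.mul_sum] at h4
  have h5 := union_bound (n := n) (κ ^ 2 * n / 4) hn
  rw [← hP] at h5
  have h6 : (0 : ℝ) < Fintype.card (Fin n × Fin n → Bool) := by
    exact_mod_cast Fintype.card_pos
  rw [Finset.sum_const, card_univ, nsmul_eq_mul, mul_one] at h4
  nlinarith

theorem exists_orientation {n : ℕ} (m : Fin n → Fin n → ℕ) (hsymm : ∀ u v, m u v = m v u)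
    (hdiag : ∀ v, m v v = 0) (κ : ℝ) (hκ : 0 < κ)
    (hn : n * Real.exp (-(κ ^ 2 * n / 4) / 2) ≤ 1 / 10) :
    ∃ c : Fin n → Fin n → ℕ, (∀ u v, c u v + c v u = m u v) ∧
      ∀ A B : Finset (Fin n), #A ≤ #B → n < #A + #B →
        |2 * (wt c A B : ℝ) - wt m A B| ≤ κ * n * #A := by
  obtain ⟨ω, hω⟩ := exists_signs m κ hκ hn
  let c : Fin n → Fin n → ℕ := fun u v =>
    m u v / 2 + if u < v then (if ω (u, v) then m u v % 2 else 0)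
      else (if ω (v, u) then 0 else m u v % 2)
  have hc : ∀ u v, 2 * (c u v : ℝ) - m u v = half m ω u v - half m ω v u := by
    intro u v
    have hmod : (m u v : ℝ) = 2 * (m u v / 2 : ℕ) + (m u v % 2 : ℕ) := by
      exact_mod_cast (Nat.div_add_mod (m u v) 2).symm
    rcases lt_trichotomy u v with h | h | h
    · simp only [c, half, h, h.not_gt, if_true, if_false, sg]
      split_ifs <;> push_cast at hmod ⊢ <;> linarith
    · subst h
      simp [c, half, hdiag]
    · rw [half, half, hsymm v u]
      simp only [c, h, h.not_gt, if_true, if_false, sg]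
      split_ifs <;> push_cast at hmod ⊢ <;> linarith
  refine ⟨c, ?_, ?_⟩
  · intro u v
    have h1 := hc u v
    have h2 := hc v u
    rw [hsymm v u] at h2
    have : (c u v : ℝ) + c v u = m u v := by linarith
    exact_mod_cast this
  · intro A B h1 h2
    have h3 : 2 * (wt c A B : ℝ) - wt m A B = imb m ω A B := by
      simp only [wt, imb, ← hc]
      push_cast
      simp only [Finset.mul_sum, Finset.sum_sub_distrib]
    rw [h3]
    exact hω A B h1 h2

/-! ### Edge counts from the degree conditions -/

/-- The numerical core. Here `p = |A|`, `q = |B|`, `d = δ` and `e` is the number of edges from `A`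
to `B`; `he1` comes from bounding the edges between `A` and the complement of `B` by the maximum
degree, and `he2` from bounding them by the multiplicity. The first is used when `p + q - n` is at least
`(3 / 2) ξ (n - q)`, the second otherwise. -/
theorem slack_arith (ξ l n p q d D r e : ℝ) (hξ : 0 < ξ) (hξ9 : ξ < 1 / 9) (hl : 1 ≤ l)
    (hn : 0 ≤ n) (hpq : p ≤ q) (hqn : q ≤ n) (hw : n < p + q)
    (hD : (1 / 2 + ξ) * (l * n) ≤ D) (hDd : D ≤ d + ξ ^ 2 * (l * n))
    (hr : r ≤ d - ξ * (l * n))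
    (he1 : d * p - D * (n - q) ≤ e) (he2 : p * (d - l * (n - q)) ≤ e) :
    ξ ^ 2 / 30 * n * p ≤ e - r * (p + q - n) := by
  obtain ⟨w, hw'⟩ : ∃ w, w = p + q - n := ⟨_, rfl⟩
  obtain ⟨z, hz'⟩ : ∃ z, z = n - q := ⟨_, rfl⟩
  have hp : p = w + z := by rw [hw', hz']; ring
  have hw0 : 0 < w := by linarith
  have hz0 : 0 ≤ z := by linarith
  have hzn : w + 2 * z ≤ n := by linarith
  rw [← hw']
  rw [← hz'] at he1 he2
  rw [hp] at he1 he2 ⊢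
  have hrw : r * w ≤ (d - ξ * (l * n)) * w := mul_le_mul_of_nonneg_right hr hw0.le
  -- It is enough to gain the same amount with the extra factor `l ≥ 1`.
  have hl' : ξ ^ 2 / 30 * n * (w + z) ≤ l * (ξ ^ 2 / 30 * n * (w + z)) :=
    le_mul_of_one_le_left (by positivity) hl
  refine hl'.trans ?_
  have hln : 0 ≤ l * n := by positivity
  rcases le_total (3 / 2 * ξ * z) w with h | h
  · have h1 : D * z ≤ (d + ξ ^ 2 * (l * n)) * z := mul_le_mul_of_nonneg_right hDd hz0
    have h2 : ξ * (l * n) * (w - ξ * z) ≤ e - r * w := by nlinarith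
    refine le_trans ?_ h2
    have h3 : ξ / 30 * (w + z) ≤ w - ξ * z := by nlinarith
    calc l * (ξ ^ 2 / 30 * n * (w + z)) = ξ * (l * n) * (ξ / 30 * (w + z)) := by ring
      _ ≤ _ := mul_le_mul_of_nonneg_left h3 (by positivity)
  · have hd : (1 / 2 + ξ - ξ ^ 2) * (l * n) * z ≤ d * z :=
      mul_le_mul_of_nonneg_right (by linarith) hz0
    have h2 : l * ((1 / 2 + ξ - ξ ^ 2) * n * z + ξ * n * w - (w + z) * z) ≤ e - r * w := by
      nlinarith
    refine le_trans ?_ h2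
    refine mul_le_mul_of_nonneg_left ?_ (by linarith)
    have h3 : (w + z) * z ≤ (n + w) / 2 * z := mul_le_mul_of_nonneg_right (by linarith) hz0
    have h4 : 0 ≤ ξ * n * w := by positivity
    have h5 : ξ ^ 2 / 30 * n * (w + z) ≤ ξ ^ 2 / 30 * n * (2 * z) :=
      mul_le_mul_of_nonneg_left (by nlinarith) (by positivity)
    have h6 : w ≤ 3 / 4 * ξ * n := by nlinarith
    have h7 : w * z ≤ 3 / 4 * ξ * n * z := mul_le_mul_of_nonneg_right h6 hz0
    have hnz : 0 ≤ n * z := by positivity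
    have h8 : 0 ≤ (ξ * (5 / 8 - ξ) - ξ ^ 2 / 15) * (n * z) := by
      apply mul_nonneg _ hnz
      nlinarith
    nlinarith

theorem slack_bound {n : ℕ} (ξ : ℝ) (hξ : 0 < ξ) (hξ9 : ξ < 1 / 9) (l : ℕ) (hl : 1 ≤ l)
    (m : Fin n → Fin n → ℕ) (d D r : ℕ) (hsymm : ∀ u v, m u v = m v u)
    (hm : ∀ u v, m u v ≤ l) (hd : ∀ v, d ≤ ∑ u, m v u) (hD : ∀ v, ∑ u, m v u ≤ D)
    (h1 : (1 / 2 + ξ) * (l * n : ℕ) ≤ (D : ℝ)) (h2 : (D : ℝ) ≤ d + ξ ^ 2 * (l * n : ℕ))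
    (h3 : (r : ℝ) ≤ d - ξ * (l * n : ℕ)) (A B : Finset (Fin n)) (hAB : #A ≤ #B)
    (hn : n < #A + #B) :
    ξ ^ 2 / 30 * n * #A ≤ (wt m A B : ℝ) - r * (#A + #B - n) := by
  have hBc : #B + #Bᶜ = n := by rw [Finset.card_add_card_compl, Fintype.card_fin]
  have hBcR : (#Bᶜ : ℝ) = n - #B := by
    rw [eq_sub_iff_add_eq, add_comm]; exact_mod_cast hBc
  have hsplit : wt m A B + wt m A Bᶜ = ∑ u ∈ A, ∑ v, m u v := by
    simp only [wt, ← Finset.sum_add_distrib, Finset.sum_add_sum_compl]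
  have hlow : #A * d ≤ ∑ u ∈ A, ∑ v, m u v := by
    rw [← smul_eq_mul]
    exact Finset.card_nsmul_le_sum _ _ _ fun u _ => hd u
  have hup1 : wt m A Bᶜ ≤ #Bᶜ * D := by
    unfold wt
    rw [Finset.sum_comm, ← smul_eq_mul]
    refine Finset.sum_le_card_nsmul _ _ _ fun v _ => ?_
    refine (Finset.sum_le_sum_of_subset (Finset.subset_univ A)).trans ?_
    simp only [fun u => hsymm u v]
    exact hD v
  have hup2 : wt m A Bᶜ ≤ #A * (#Bᶜ * l) := by
    unfold wt
    rw [← smul_eq_mul (#A)]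
    refine Finset.sum_le_card_nsmul _ _ _ fun u _ => ?_
    rw [← smul_eq_mul]
    exact Finset.sum_le_card_nsmul _ _ _ fun v _ => hm u v
  have e1 : ((#A * d : ℕ) : ℝ) ≤ (wt m A B + #Bᶜ * D : ℕ) := by exact_mod_cast (by omega)
  have e2 : ((#A * d : ℕ) : ℝ) ≤ (wt m A B + #A * (#Bᶜ * l) : ℕ) := by
    exact_mod_cast (by omega)
  push_cast at e1 e2 h1 h2 h3
  rw [hBcR] at e1 e2
  refine slack_arith ξ l n #A #B d D r _ hξ hξ9 (by exact_mod_cast hl) (by positivity)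
    (by exact_mod_cast hAB) (by exact_mod_cast (by omega : #B ≤ n)) (by exact_mod_cast hn)
    h1 h2 h3 ?_ ?_ <;> linarith

theorem exists_threshold (κ : ℝ) (hκ : 0 < κ) :
    ∃ n₀ : ℕ, ∀ n : ℕ, n₀ ≤ n → n * Real.exp (-(κ ^ 2 * n / 4) / 2) ≤ 1 / 10 := by
  have hb : 0 < κ ^ 2 / 8 := by positivity
  have h : Filter.Tendsto (fun x : ℝ => x * Real.exp (-(κ ^ 2 / 8) * x)) Filter.atTop
      (nhds 0) := by
    simpa using tendsto_rpow_mul_exp_neg_mul_atTop_nhds_zero 1 (κ ^ 2 / 8) hb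
  have h' := (h.comp tendsto_natCast_atTop_atTop).eventually
    (eventually_le_nhds (show (0 : ℝ) < 1 / 10 by norm_num))
  obtain ⟨n₀, hn₀⟩ := Filter.eventually_atTop.1 h'
  refine ⟨n₀, fun n hn => ?_⟩
  have := hn₀ n hn
  simp only [Function.comp] at this
  rwa [show -(κ ^ 2 * n / 4) / 2 = -(κ ^ 2 / 8) * (n : ℝ) by ring]


/-- Let `0 < ξ < 1/9` and let `G` be a loopless multigraph on `n` vertices
(`n` sufficiently large) in which every pair of vertices is joined by at most `ℓ`
edges, with minimum degree `δ` and maximum degree `Δ` satisfying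
`(1/2 + ξ)ℓn ≤ Δ ≤ δ + ξ²ℓn` and `δ ≥ ℓn/2`. Then for every even positive
integer `r ≤ δ − ξℓn`, `G` contains an `r`-factor. -/
theorem stmt_7 (ξ : ℝ) (hξ : 0 < ξ) (hξ9 : ξ < 1/9) (ℓ : ℕ) (hℓ : 1 ≤ ℓ) :
    ∃ n₀ : ℕ, ∀ n : ℕ, n₀ ≤ n →
      ∀ (mult : Fin n → Fin n → ℕ) (δ Δ : ℕ),
        (∀ u v, mult u v = mult v u) → (∀ v, mult v v = 0) →
        (∀ u v, mult u v ≤ ℓ) →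
        (∀ v, δ ≤ ∑ u, mult v u) → (∃ v, ∑ u, mult v u = δ) →
        (∀ v, ∑ u, mult v u ≤ Δ) → (∃ v, ∑ u, mult v u = Δ) →
        ((1/2 + ξ) * (ℓ * n : ℕ) ≤ (Δ : ℝ)) →
        ((Δ : ℝ) ≤ (δ : ℝ) + ξ^2 * (ℓ * n : ℕ)) →
        (((ℓ * n : ℕ) : ℝ) / 2 ≤ (δ : ℝ)) →
        ∀ r : ℕ, Even r → 0 < r → ((r : ℝ) ≤ (δ : ℝ) - ξ * (ℓ * n : ℕ)) →
          ∃ mult' : Fin n → Fin n → ℕ,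
            (∀ u v, mult' u v ≤ mult u v) ∧
            (∀ u v, mult' u v = mult' v u) ∧
            (∀ v, ∑ u, mult' v u = r) := by
  have hκ : 0 < ξ ^ 2 / 30 := by positivity
  obtain ⟨n₀, hn₀⟩ := exists_threshold (ξ ^ 2 / 30) hκ
  refine ⟨n₀, fun n hn m δ Δ hsymm hdiag hm hδ _ hΔ _ h1 h2 _ r hr _ h3 => ?_⟩
  obtain ⟨c, hc, himb⟩ := exists_orientation m hsymm hdiag _ hκ (hn₀ n hn)
  obtain ⟨s, rfl⟩ := hr
  have hrev : ∀ A B : Finset (Fin n), (wt c A B : ℝ) + wt c B A = wt m A B := by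
    intro A B
    have : wt c A B + wt c B A = wt m A B := by
      unfold wt
      rw [Finset.sum_comm (s := B)]
      simp only [← Finset.sum_add_distrib, hc]
    exact_mod_cast this
  have hcut : Cut s c := by
    intro A B
    rw [Fintype.card_fin]
    rcases le_or_gt (#A + #B) n with hle | hgt
    · exact (Nat.mul_le_mul_left s hle).trans (Nat.le_add_right _ _)
    have key : (s : ℝ) * (#A + #B) ≤ s * n + wt c A B := by
      rcases le_total (#A) (#B) with hAB | hAB
      · have i1 := slack_bound ξ hξ hξ9 ℓ hℓ m δ Δ (s + s) hsymm hm hδ hΔ h1 h2 h3 A B hAB hgt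
        have i2 := abs_le.1 (himb A B hAB hgt)
        push_cast at i1
        linarith [i2.1]
      -- If `|B| < |A|`, use the pair `(B, A)`, whose imbalance is the negative of that of `(A, B)`.
      · have hgt' : n < #B + #A := by omega
        have i1 := slack_bound ξ hξ hξ9 ℓ hℓ m δ Δ (s + s) hsymm hm hδ hΔ h1 h2 h3 B A hAB hgt'
        have i2 := abs_le.1 (himb B A hAB hgt')
        have i3 := hrev B A
        push_cast at i1
        linarith [i2.2]
    exact_mod_cast key
  obtain ⟨M, hM, hrow, hcol⟩ := exists_bipartite_factor s c hcut
  refine ⟨fun u v => M u v + M v u, fun u v => ?_, fun u v => add_comm _ _, fun v => ?_⟩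
  · rw [← hc u v]
    exact Nat.add_le_add (hM u v) (hM v u)
  · rw [Finset.sum_add_distrib, hrow, hcol]
end
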